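/- Let B be a real Banach space with dual B* and let C be a nonempty, closed, and convex subset of B. Let x ∈ B and suppose there exists jx ∈ J(x) with π_C(jx) ≠ ∅. Then Π_C(x) is a union of nonempty, closed, convex, and bounded subsets of C, and Π_C(x) itself is a bounded set. -/

import Mathlib

open Set Filter

noncomputable section

/-- The normalized duality map `J x = {φ : ⟨φ,x⟩ = ‖x‖² and ‖φ‖ = ‖x‖}`. -/
def dualityMap {B : Type*} [NormedAddCommGroup B] [NormedSpace ℝ B] (x : B) :
    Set (B →L[ℝ] ℝ) :=
  {φ | φ x = ‖x‖ ^ 2 ∧ ‖φ‖ = ‖x‖}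

/-- The Lyapunov functional `V(φ,x) = ‖φ‖² - 2⟨φ,x⟩ + ‖x‖²`. -/
def lyapV {B : Type*} [NormedAddCommGroup B] [NormedSpace ℝ B] (φ : B →L[ℝ] ℝ) (x : B) : ℝ :=
  ‖φ‖ ^ 2 - 2 * φ x + ‖x‖ ^ 2

/-- The generalized projection: the set of minimizers of `V(φ, ·)` over `C`. -/
def genProj {B : Type*} [NormedAddCommGroup B] [NormedSpace ℝ B] (C : Set B)
    (φ : B →L[ℝ] ℝ) : Set B :=
  {u | u ∈ C ∧ ∀ y ∈ C, lyapV φ u ≤ lyapV φ y}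

/-- The generalized metric projection `Π_C x = ⋃_{jx ∈ J x} π_C (jx)`. -/
def genMetricProj {B : Type*} [NormedAddCommGroup B] [NormedSpace ℝ B] (C : Set B) (x : B) :
    Set B :=
  ⋃ φ ∈ dualityMap x, genProj C φ

/-- The metric projection: the set of nearest points to `x` in `C`. -/
def metricProj {B : Type*} [NormedAddCommGroup B] [NormedSpace ℝ B] (C : Set B) (x : B) :
    Set B :=
  {u | u ∈ C ∧ ∀ y ∈ C, ‖x - u‖ ≤ ‖x - y‖}

/-- The set of generalized identical points of `x`. -/
def genIdentical {B : Type*} [NormedAddCommGroup B] [NormedSpace ℝ B] (x : B) : Set B :=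
  {y | (dualityMap x ∩ dualityMap y).Nonempty}

section Lyapunov

variable {B : Type*} [NormedAddCommGroup B] [NormedSpace ℝ B]

theorem continuous_lyapV (φ : B →L[ℝ] ℝ) : Continuous (lyapV φ) := by
  unfold lyapV
  fun_prop

theorem convexOn_lyapV (φ : B →L[ℝ] ℝ) : ConvexOn ℝ univ (lyapV φ) := by
  have hsq : ConvexOn ℝ univ fun u : B => ‖u‖ ^ 2 :=
    convexOn_univ_norm.pow (fun _ _ => norm_nonneg _) 2
  have hlin : ConvexOn ℝ univ fun u : B => ((-2 : ℝ) • φ) u :=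
    ((-2 : ℝ) • φ).toLinearMap.convexOn convex_univ
  refine ((hlin.add hsq).add_const (‖φ‖ ^ 2)).congr fun u _ => ?_
  simp [lyapV]
  ring

theorem sq_norm_sub_norm_le_lyapV (φ : B →L[ℝ] ℝ) (u : B) :
    (‖φ‖ - ‖u‖) ^ 2 ≤ lyapV φ u := by
  have hφ : φ u ≤ ‖φ‖ * ‖u‖ := (le_abs_self _).trans (φ.le_opNorm u)
  unfold lyapV
  linarith

theorem lyapV_le_sq_norm_add_norm (φ : B →L[ℝ] ℝ) (u : B) :
    lyapV φ u ≤ (‖φ‖ + ‖u‖) ^ 2 := by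
  have hφ : -φ u ≤ ‖φ‖ * ‖u‖ := (neg_le_abs _).trans (φ.le_opNorm u)
  unfold lyapV
  linarith

theorem genProj_eq_inter (C : Set B) (φ : B →L[ℝ] ℝ) :
    genProj C φ = C ∩ ⋂ y ∈ C, {u | lyapV φ u ≤ lyapV φ y} := by
  ext u
  simp [genProj]

theorem isClosed_genProj {C : Set B} (hC : IsClosed C) (φ : B →L[ℝ] ℝ) :
    IsClosed (genProj C φ) := by
  rw [genProj_eq_inter]
  exact hC.inter <| isClosed_biInter fun _ _ =>
    isClosed_le (continuous_lyapV φ) continuous_const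

theorem convex_genProj {C : Set B} (hC : Convex ℝ C) (φ : B →L[ℝ] ℝ) :
    Convex ℝ (genProj C φ) := by
  rw [genProj_eq_inter]
  refine hC.inter <| convex_iInter₂ fun y _ => ?_
  simpa using (convexOn_lyapV φ).convex_le (lyapV φ y)

theorem norm_le_of_mem_genProj {C : Set B} {φ : B →L[ℝ] ℝ} {u y : B}
    (hu : u ∈ genProj C φ) (hy : y ∈ C) : ‖u‖ ≤ 2 * ‖φ‖ + ‖y‖ := by
  have hsq : (‖φ‖ - ‖u‖) ^ 2 ≤ (‖φ‖ + ‖y‖) ^ 2 :=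
    (sq_norm_sub_norm_le_lyapV φ u).trans <|
      (hu.2 y hy).trans (lyapV_le_sq_norm_add_norm φ y)
  have := (abs_le_of_sq_le_sq' hsq (by positivity)).1
  linarith

theorem genProj_subset_genMetricProj (C : Set B) {x : B} {φ : B →L[ℝ] ℝ}
    (hφ : φ ∈ dualityMap x) : genProj C φ ⊆ genMetricProj C x :=
  subset_biUnion_of_mem (u := fun φ => genProj C φ) hφ

theorem isBounded_genMetricProj {C : Set B} (hC : C.Nonempty) (x : B) :
    Bornology.IsBounded (genMetricProj C x) := by
  obtain ⟨y, hy⟩ := hC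
  refine isBounded_iff_forall_norm_le.2 ⟨2 * ‖x‖ + ‖y‖, fun u hu => ?_⟩
  obtain ⟨φ, hφ, hu⟩ := mem_iUnion₂.1 hu
  exact hφ.2 ▸ norm_le_of_mem_genProj hu hy

end Lyapunov

theorem statement_8 {B : Type*} [NormedAddCommGroup B] [NormedSpace ℝ B] [CompleteSpace B]
    (C : Set B) (hC : C.Nonempty) (hclosed : IsClosed C) (hconv : Convex ℝ C)
    (x : B) (h : ∃ jx ∈ dualityMap x, (genProj C jx).Nonempty) :
    (∃ 𝒮 : Set (Set B), genMetricProj C x = ⋃₀ 𝒮 ∧ 𝒮.Nonempty ∧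
        ∀ s ∈ 𝒮, s.Nonempty ∧ IsClosed s ∧ Convex ℝ s ∧
          Bornology.IsBounded s ∧ s ⊆ C) ∧
      Bornology.IsBounded (genMetricProj C x) := by
  have hbdd := isBounded_genMetricProj hC x
  obtain ⟨jx, hjx, hne⟩ := h
  refine ⟨⟨{s | ∃ φ ∈ dualityMap x, genProj C φ = s ∧ s.Nonempty}, ?_,
    ⟨_, jx, hjx, rfl, hne⟩, ?_⟩, hbdd⟩
  · refine Subset.antisymm (fun u hu => ?_) (sUnion_subset ?_)
    · obtain ⟨φ, hφ, hu⟩ := mem_iUnion₂.1 hu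
      exact ⟨_, ⟨φ, hφ, rfl, u, hu⟩, hu⟩
    · rintro _ ⟨φ, hφ, rfl, -⟩
      exact genProj_subset_genMetricProj C hφ
  · rintro _ ⟨φ, hφ, rfl, hs⟩
    exact ⟨hs, isClosed_genProj hclosed φ, convex_genProj hconv φ,
      hbdd.subset (genProj_subset_genMetricProj C hφ), fun _ hu => hu.1⟩
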